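/- Let β,γ ∈ ℝ with β²+γ² > 0 and, for ω ∈ H²(S²) with zero mean, define the linearized operator Lω = (1/2)(3β√(5/π)cosθ + γ√(3/π))·(1 + 6Δ⁻¹)∂_φω, where Δ⁻¹ is the inverse of the Laplace–Beltrami operator on mean-zero functions. Then Lω = 0 if and only if ω = ω₀ + ω₂ where ω₀ is zonal and ω₂ ∈ span{Y₂^m : |m| ≤ 2}. -/

import Mathlib

open MeasureTheory
open scoped ENNReal

noncomputable section

/-- Functions on the unit sphere, represented in colatitude-longitude coordinates `(θ, φ)`. -/
abbrev SphereFun : Type := ℝ → ℝ → ℝ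

/-- The `L²` inner product on the sphere:
`⟨u,v⟩ = ∫₀^{2π} ∫₀^π u v sin θ dθ dφ`. -/
def sInner (u v : SphereFun) : ℝ :=
  ∫ φ in (0:ℝ)..(2*Real.pi), ∫ θ in (0:ℝ)..Real.pi, u θ φ * v θ φ * Real.sin θ

/-- Legendre polynomials via Rodrigues' formula. -/
def legP (n : ℕ) (s : ℝ) : ℝ :=
  (1 / ((2:ℝ)^n * (Nat.factorial n : ℝ))) * iteratedDeriv n (fun x : ℝ => (x^2 - 1)^n) s

/-- Associated Legendre functions `P_n^m`. -/
def assocLegP (n m : ℕ) (s : ℝ) : ℝ :=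
  (-1 : ℝ)^m * (1 - s^2) ^ ((m : ℝ)/2) * iteratedDeriv m (legP n) s

/-- Real spherical harmonics `Y_n^m`. -/
def Ynm (n : ℕ) (m : ℤ) : SphereFun := fun θ φ =>
  if m = 0 then
    Real.sqrt ((2*(n:ℝ)+1)/(4*Real.pi)) * legP n (Real.cos θ)
  else if 0 < m then
    (-1 : ℝ)^(m.natAbs) * Real.sqrt 2 *
      Real.sqrt ((2*(n:ℝ)+1)/(4*Real.pi) *
        ((Nat.factorial (n - m.natAbs) : ℝ) / (Nat.factorial (n + m.natAbs) : ℝ))) *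
      assocLegP n m.natAbs (Real.cos θ) * Real.cos ((m.natAbs : ℝ) * φ)
  else
    (-1 : ℝ)^(m.natAbs) * Real.sqrt 2 *
      Real.sqrt ((2*(n:ℝ)+1)/(4*Real.pi) *
        ((Nat.factorial (n - m.natAbs) : ℝ) / (Nat.factorial (n + m.natAbs) : ℝ))) *
      assocLegP n m.natAbs (Real.cos θ) * Real.sin ((m.natAbs : ℝ) * φ)

/-- The spherical-harmonic coefficient `u_n^m = ⟨u, Y_n^m⟩`. -/
def coeff (u : SphereFun) (n : ℕ) (m : ℤ) : ℝ := sInner u (Ynm n m)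

/-- `μ_n = n(n+1) + 1`. -/
def muSp (n : ℕ) : ℝ := (n:ℝ)*((n:ℝ)+1)+1

/-- Squared (inhomogeneous) Sobolev norm `‖u‖²_{H^k} = Σ μ_n^k |u_n^m|²`. -/
def sobNormSq (k : ℕ) (u : SphereFun) : ℝ≥0∞ :=
  ∑' p : ℕ × ℤ, if |p.2| ≤ (p.1 : ℤ) then
    ENNReal.ofReal ((muSp p.1)^k * (coeff u p.1 p.2)^2) else 0

/-- Squared homogeneous Sobolev norm `‖u‖²_{Ḣ^k} = Σ_{n ≥ 1} λ_n^k |u_n^m|²`. -/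
def dotNormSq (k : ℕ) (u : SphereFun) : ℝ≥0∞ :=
  ∑' p : ℕ × ℤ, if 1 ≤ p.1 ∧ |p.2| ≤ (p.1 : ℤ) then
    ENNReal.ofReal (((p.1:ℝ)*((p.1:ℝ)+1))^k * (coeff u p.1 p.2)^2) else 0

/-- Squared Gevrey norm `‖u‖²_{G_λ} = Σ_{n ≥ 1} μ_n² e^{2λ√μ_n} |u_n^m|²`. -/
def gevNormSq (lam : ℝ) (u : SphereFun) : ℝ≥0∞ :=
  ∑' p : ℕ × ℤ, if 1 ≤ p.1 ∧ |p.2| ≤ (p.1 : ℤ) then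
    ENNReal.ofReal ((muSp p.1)^2 * Real.exp (2*lam*Real.sqrt (muSp p.1)) *
      (coeff u p.1 p.2)^2) else 0

/-- `∂_θ`. -/
def dTheta (u : SphereFun) : SphereFun := fun θ φ => deriv (fun t => u t φ) θ

/-- `∂_φ`. -/
def dPhi (u : SphereFun) : SphereFun := fun θ φ => deriv (fun p => u θ p) φ

/-- The Laplace–Beltrami operator in colatitude-longitude coordinates:
`Δu = (1/sinθ)∂_θ(sinθ ∂_θu) + (1/sin²θ)∂²_φu`. -/
def lapS (u : SphereFun) : SphereFun := fun θ φ =>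
  (1 / Real.sin θ) * deriv (fun t => Real.sin t * dTheta u t φ) θ
  + (1 / (Real.sin θ)^2) * dPhi (dPhi u) θ φ

/-- A zonal function: one depending only on the colatitude `θ`. -/
def Zonal (u : SphereFun) : Prop := ∀ (θ φ₁ φ₂ : ℝ), u θ φ₁ = u θ φ₂

/-- Zonal on the coordinate chart `θ ∈ [0, π]`. -/
def ZonalOn (u : SphereFun) : Prop :=
  ∀ θ ∈ Set.Icc (0:ℝ) Real.pi, ∀ (φ₁ φ₂ : ℝ), u θ φ₁ = u θ φ₂

/-- `2π`-periodicity in the longitude. -/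
def PeriodicPhi (u : SphereFun) : Prop := ∀ θ φ, u θ (φ + 2*Real.pi) = u θ φ

/-- The advection term `U·∇f` for the velocity `U = ∇⊥Ψ`, i.e.
`(1/sinθ)∂_φΨ ∂_θf − ∂_θΨ (1/sinθ)∂_φf`. -/
def advect (Ψ f : SphereFun) : SphereFun := fun θ φ =>
  (1 / Real.sin θ) * dPhi Ψ θ φ * dTheta f θ φ
  - dTheta Ψ θ φ * ((1 / Real.sin θ) * dPhi f θ φ)

/-- Smoothness in the coordinates. -/
def SphSmooth (u : SphereFun) : Prop := ContDiff ℝ (⊤ : ℕ∞) (Function.uncurry u)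

/-- A function is trivial if it is a zonal function plus an element of
`span{Y₂^m : |m| ≤ 2}`; non-triviality is the negation of this. -/
def SphNontrivial (u : SphereFun) : Prop :=
  ¬ ∃ (z : SphereFun) (c : ℤ → ℝ), Zonal z ∧
      ∀ θ ∈ Set.Icc (0:ℝ) Real.pi, ∀ φ : ℝ,
        u θ φ = z θ φ + ∑ m ∈ Finset.Icc (-2 : ℤ) 2, c m * Ynm 2 m θ φ

/-- Real analyticity on the sphere, characterized by membership in a Gevrey class. -/
def RealAnalyticSphere (u : SphereFun) : Prop := ∃ lam > 0, gevNormSq lam u < ⊤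

/-- The inverse Laplace–Beltrami operator `Δ⁻¹` on mean-zero functions, defined
through the spherical harmonics expansion. -/
def invLap (u : SphereFun) : SphereFun := fun θ φ =>
  ∑' p : ℕ × ℤ, if 1 ≤ p.1 ∧ |p.2| ≤ (p.1 : ℤ) then
    (-(1:ℝ)/((p.1:ℝ)*((p.1:ℝ)+1))) * coeff u p.1 p.2 * Ynm p.1 p.2 θ φ else 0

/-- The linearization of the Euler equations on the `γ`-rotating sphere around
the Rossby–Haurwitz vorticity:
`Lω = (1/2)(3β√(5/π)cosθ + γ√(3/π))(1 + 6Δ⁻¹)∂_φω`. -/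
def Lop (β γ : ℝ) (ω : SphereFun) : SphereFun := fun θ φ =>
  (1/2) * (3*β*Real.sqrt (5/Real.pi) * Real.cos θ + γ*Real.sqrt (3/Real.pi)) *
    (dPhi ω θ φ + 6 * invLap (dPhi ω) θ φ)

/-
Where the prefactor, which vanishes on at most one latitude, is nonzero, `Lω = 0` says
`(1 + 6Δ⁻¹) ∂_φω = 0`. Pairing with `Y_n^m` for `n ≥ 1` gives
`(1 - 6 / (n (n + 1))) ⟨∂_φω, Y_n^m⟩ = 0`, so only the coefficients of degree 2 of `∂_φω` survive.
By completeness (Weierstrass approximation in `cos θ`, Fourier uniqueness in `φ`), `∂_φω` is a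
harmonic of degree 2; its coefficient at `m` is `m` times that of `ω` at `-m`, so it is the
longitude derivative of the degree-2 part of `ω`, and the rest of `ω` is zonal.
-/

section Legendre

open Polynomial

lemma integral_eval_derivative_mul {a b : ℝ} {p : ℝ[X]} (ha : p.IsRoot a) (hb : p.IsRoot b)
    (q : ℝ[X]) :
    ∫ x in a..b, (derivative p * q).eval x = -∫ x in a..b, (p * derivative q).eval x := by
  have parts := intervalIntegral.integral_mul_deriv_eq_deriv_mul (a := a) (b := b)
    (fun x _ => p.hasDerivAt x) (fun x _ => q.hasDerivAt x)
    ((derivative p).continuous.intervalIntegrable _ _)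
    ((derivative q).continuous.intervalIntegrable _ _)
  rw [ha.eq_zero, hb.eq_zero] at parts
  simp only [eval_mul]
  linarith

lemma integral_eval_iterate_derivative_mul {a b : ℝ} {p : ℝ[X]} {k : ℕ}
    (ha : ∀ j < k, (derivative^[j] p).IsRoot a) (hb : ∀ j < k, (derivative^[j] p).IsRoot b)
    (q : ℝ[X]) :
    ∫ x in a..b, (derivative^[k] p * q).eval x =
      (-1) ^ k * ∫ x in a..b, (p * derivative^[k] q).eval x := by
  induction k generalizing q with
  | zero => simp
  | succ k ih =>
    rw [Function.iterate_succ_apply',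
      integral_eval_derivative_mul (ha k k.lt_succ_self) (hb k k.lt_succ_self),
      ih (fun j hj => ha j (hj.trans k.lt_succ_self)) (fun j hj => hb j (hj.trans k.lt_succ_self)),
      Function.iterate_succ_apply]
    ring

lemma isRoot_iterate_derivative_X_sq_sub_one_pow {n j : ℕ} (hj : j < n) {x : ℝ} (hx : x ^ 2 = 1) :
    (derivative^[j] ((X ^ 2 - 1) ^ n : ℝ[X])).IsRoot x := by
  refine IsRoot.dvd ?_ (pow_sub_dvd_iterate_derivative_pow (X ^ 2 - 1 : ℝ[X]) n j)
  simp [IsRoot.def, hx, Nat.sub_ne_zero_of_lt hj]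

lemma monic_X_sq_sub_one_pow (n : ℕ) : ((X ^ 2 - 1) ^ n : ℝ[X]).Monic :=
  (monic_X_pow_sub_C 1 two_ne_zero).pow n

lemma natDegree_X_sq_sub_one_pow (n : ℕ) : ((X ^ 2 - 1) ^ n : ℝ[X]).natDegree = 2 * n := by
  rw [natDegree_pow, ← C_1, natDegree_X_pow_sub_C, mul_comm]

lemma coeff_X_sq_sub_one_pow_two_mul (n : ℕ) : ((X ^ 2 - 1) ^ n : ℝ[X]).coeff (2 * n) = 1 := by
  rw [← natDegree_X_sq_sub_one_pow n]
  exact monic_X_sq_sub_one_pow n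

lemma degree_iterate_derivative_X_sq_sub_one_pow {n k : ℕ} (hk : k ≤ 2 * n) :
    (derivative^[k] ((X ^ 2 - 1) ^ n : ℝ[X])).degree = (2 * n - k : ℕ) := by
  refine degree_eq_of_le_of_coeff_ne_zero (natDegree_le_iff_degree_le.mp ?_) ?_
  · rw [← natDegree_X_sq_sub_one_pow n]
    exact natDegree_iterate_derivative _ k
  · rw [coeff_iterate_derivative, Nat.sub_add_cancel hk, coeff_X_sq_sub_one_pow_two_mul]
    simp [Nat.descFactorial_eq_zero_iff_lt, hk]

lemma iterate_derivative_two_mul_X_sq_sub_one_pow (n : ℕ) :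
    derivative^[2 * n] ((X ^ 2 - 1) ^ n : ℝ[X]) = C ((2 * n).factorial : ℝ) := by
  have degree_zero := degree_iterate_derivative_X_sq_sub_one_pow (le_refl (2 * n))
  rw [Nat.sub_self] at degree_zero
  rw [eq_C_of_degree_le_zero degree_zero.le, coeff_iterate_derivative, zero_add,
    coeff_X_sq_sub_one_pow_two_mul, Nat.descFactorial_self, nsmul_eq_mul, mul_one]

lemma integral_one_sub_sq_pow_succ (n : ℕ) :
    (2 * (n : ℝ) + 3) * ∫ x in (-1 : ℝ)..1, (1 - x ^ 2) ^ (n + 1) =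
      (2 * (n : ℝ) + 2) * ∫ x in (-1 : ℝ)..1, (1 - x ^ 2) ^ n := by
  have deriv_eq (x : ℝ) : HasDerivAt (fun x : ℝ => x * (1 - x ^ 2) ^ (n + 1))
      ((2 * n + 3) * (1 - x ^ 2) ^ (n + 1) - (2 * n + 2) * (1 - x ^ 2) ^ n) x := by
    refine ((hasDerivAt_id x).mul
      (((hasDerivAt_pow 2 x).const_sub 1).fun_pow (n + 1))).congr_deriv ?_
    simp only [id_eq, Nat.cast_add, Nat.cast_one, Nat.cast_ofNat, Nat.add_sub_cancel]
    ring
  have ftc := intervalIntegral.integral_eq_sub_of_hasDerivAt (a := -1) (b := 1)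
    (fun x _ => deriv_eq x) (Continuous.intervalIntegrable (by fun_prop) _ _)
  rw [intervalIntegral.integral_sub (Continuous.intervalIntegrable (by fun_prop) _ _)
    (Continuous.intervalIntegrable (by fun_prop) _ _), intervalIntegral.integral_const_mul,
    intervalIntegral.integral_const_mul] at ftc
  norm_num at ftc
  linarith

lemma integral_one_sub_sq_pow (n : ℕ) :
    ∫ x in (-1 : ℝ)..1, (1 - x ^ 2) ^ n =
      2 ^ (2 * n + 1) * (n.factorial : ℝ) ^ 2 / (2 * n + 1).factorial := by
  induction n with
  | zero => norm_num
  | succ n ih =>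
    have recurrence := integral_one_sub_sq_pow_succ n
    rw [ih] at recurrence
    rw [show 2 * (n + 1) + 1 = 2 * n + 1 + 1 + 1 by ring]
    simp only [Nat.factorial_succ (2 * n + 1 + 1), Nat.factorial_succ (2 * n + 1),
      Nat.factorial_succ n]
    push_cast
    field_simp at recurrence ⊢
    linear_combination (2 : ℝ) * (n + 1) * recurrence

/-- The Legendre polynomial `P_n`, given by Rodrigues' formula as an element of `ℝ[X]`; the
function `legP n` is its evaluation. -/
def legendrePoly (n : ℕ) : ℝ[X] :=
  C (1 / ((2 : ℝ) ^ n * n.factorial)) * derivative^[n] ((X ^ 2 - 1) ^ n)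

lemma iteratedDeriv_polynomial_eval (p : ℝ[X]) (k : ℕ) :
    iteratedDeriv k (fun x => p.eval x) = fun x => (derivative^[k] p).eval x := by
  induction k with
  | zero => simp
  | succ k ih =>
    ext x
    rw [iteratedDeriv_succ, ih, Polynomial.deriv, Function.iterate_succ_apply']

lemma legP_eq_eval_legendrePoly (n : ℕ) : legP n = fun x => (legendrePoly n).eval x := by
  have rodrigues := iteratedDeriv_polynomial_eval ((X ^ 2 - 1) ^ n) n
  simp only [eval_pow, eval_sub, eval_X, eval_one] at rodrigues
  ext x
  rw [legP, rodrigues, legendrePoly, eval_mul, eval_C]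

lemma iterate_derivative_legendrePoly (n k : ℕ) :
    derivative^[k] (legendrePoly n) =
      C (1 / ((2 : ℝ) ^ n * n.factorial)) * derivative^[n + k] ((X ^ 2 - 1) ^ n) := by
  rw [legendrePoly, iterate_derivative_C_mul, ← Function.iterate_add_apply, add_comm]

lemma degree_iterate_derivative_legendrePoly (m i : ℕ) :
    (derivative^[m] (legendrePoly (m + i))).degree = i := by
  rw [iterate_derivative_legendrePoly, degree_C_mul (by positivity),
    degree_iterate_derivative_X_sq_sub_one_pow (by omega)]
  congr 1
  omega

lemma iterate_derivative_legendrePoly_eq_zero {n m : ℕ} (h : n < m) :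
    derivative^[m] (legendrePoly n) = 0 := by
  have degree_eq := degree_iterate_derivative_legendrePoly 0 n
  rw [zero_add, Function.iterate_zero_apply] at degree_eq
  exact iterate_derivative_eq_zero (by rwa [natDegree_eq_of_degree_eq_some degree_eq])

lemma span_iterate_derivative_legendrePoly (m : ℕ) :
    Submodule.span ℝ (Set.range fun i => derivative^[m] (legendrePoly (m + i))) = ⊤ := by
  let S : Polynomial.Sequence ℝ :=
    ⟨fun i => derivative^[m] (legendrePoly (m + i)), degree_iterate_derivative_legendrePoly m⟩
  exact S.span fun i => isUnit_iff_ne_zero.mpr (leadingCoeff_ne_zero.mpr (S.ne_zero i))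

lemma X_sq_sub_one_mul_derivative_pow (n : ℕ) :
    (X ^ 2 - 1) * derivative ((X ^ 2 - 1) ^ n : ℝ[X]) = C (2 * n : ℝ) * X * (X ^ 2 - 1) ^ n := by
  rcases n with _ | n
  · simp
  · simp only [derivative_pow, derivative_sub, derivative_one, derivative_X, C_mul, C_ofNat,
      map_natCast, Nat.cast_ofNat, Nat.add_sub_cancel]
    ring

lemma iterate_derivative_X_sq_sub_one_pow_ode (n k : ℕ) :
    (X ^ 2 - 1) * derivative^[k + 2] ((X ^ 2 - 1) ^ n : ℝ[X])
      + C (2 * (k + 1 - n) : ℝ) * X * derivative^[k + 1] ((X ^ 2 - 1) ^ n)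
      + C ((k + 1) * (k - 2 * n) : ℝ) * derivative^[k] ((X ^ 2 - 1) ^ n) = 0 := by
  induction k with
  | zero =>
    have h := congrArg derivative (X_sq_sub_one_mul_derivative_pow n)
    simp only [derivative_mul, derivative_sub, derivative_X_pow, derivative_one, derivative_C,
      derivative_X] at h
    simp only [Function.iterate_succ_apply', Function.iterate_zero_apply, C_mul, C_add, C_sub,
      C_ofNat, map_natCast, C_1, C_0, Nat.cast_zero, Nat.cast_ofNat] at h ⊢
    linear_combination h
  | succ k ih =>
    have h := congrArg derivative ih
    simp only [derivative_add, derivative_mul, derivative_sub, derivative_X_pow, derivative_one,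
      derivative_C, derivative_X, derivative_zero, ← Function.iterate_succ_apply' derivative] at h
    simp only [C_mul, C_add, C_sub, C_ofNat, map_natCast, C_1, Nat.cast_add, Nat.cast_one,
      Nat.cast_ofNat] at h ⊢
    linear_combination h

-- The associated Legendre equation in self-adjoint form.
lemma derivative_weight_mul_iterate_derivative_legendrePoly (n m : ℕ) :
    derivative ((1 - X ^ 2) ^ (m + 1) * derivative^[m + 1] (legendrePoly n)) =
      -(C (((n : ℝ) - m) * (n + m + 1)) *
        ((1 - X ^ 2) ^ m * derivative^[m] (legendrePoly n))) := by
  have ode := iterate_derivative_X_sq_sub_one_pow_ode n (n + m)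
  rw [derivative_mul, ← Function.iterate_succ_apply' derivative, iterate_derivative_legendrePoly,
    iterate_derivative_legendrePoly, iterate_derivative_legendrePoly]
  simp only [derivative_pow, derivative_sub, derivative_one, derivative_X, C_mul, C_add, C_sub,
    C_ofNat, map_natCast, C_1, Nat.cast_add, Nat.cast_ofNat, Nat.cast_one, Nat.add_sub_cancel,
    ← add_assoc] at ode ⊢
  linear_combination
    (-C (1 / ((2 : ℝ) ^ n * n.factorial)) * (1 - X ^ 2) ^ m) * ode

/-- The inner product `∫ P_n^m P_{n'}^m` of two associated Legendre functions of the same order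
over `[-1, 1]`; the two factors `(1 - x²)^{m/2}` are merged so that the integrand is polynomial. -/
def assocLegendreInner (m n n' : ℕ) : ℝ :=
  ∫ x in (-1 : ℝ)..1,
    ((1 - X ^ 2) ^ m * derivative^[m] (legendrePoly n) * derivative^[m] (legendrePoly n')).eval x

lemma assocLegendreInner_comm (m n n' : ℕ) :
    assocLegendreInner m n n' = assocLegendreInner m n' n := by
  unfold assocLegendreInner
  rw [mul_right_comm]

lemma assocLegendreInner_succ (m n n' : ℕ) :
    assocLegendreInner (m + 1) n n' =
      ((n : ℝ) - m) * (n + m + 1) * assocLegendreInner m n n' := by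
  have parts := integral_eval_derivative_mul (a := -1) (b := 1)
    (p := (1 - X ^ 2) ^ (m + 1) * derivative^[m + 1] (legendrePoly n))
    (by simp) (by simp) (derivative^[m] (legendrePoly n'))
  rw [derivative_weight_mul_iterate_derivative_legendrePoly,
    ← Function.iterate_succ_apply' derivative, neg_mul, mul_assoc (C _)] at parts
  simp only [eval_neg, eval_C_mul, intervalIntegral.integral_neg,
    intervalIntegral.integral_const_mul] at parts
  exact (neg_injective parts).symm

lemma assocLegendreInner_zero_of_ne {n n' : ℕ} (h : n ≠ n') : assocLegendreInner 0 n n' = 0 := by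
  have symm := assocLegendreInner_comm 1 n n'
  rw [assocLegendreInner_succ, assocLegendreInner_succ, assocLegendreInner_comm 0 n' n] at symm
  have difference : ((n : ℝ) - n') * (n + n' + 1) * assocLegendreInner 0 n n' = 0 := by
    push_cast at symm
    linear_combination symm
  have sub_ne : (n : ℝ) - n' ≠ 0 := sub_ne_zero.mpr (by exact_mod_cast h)
  have add_ne : (n : ℝ) + n' + 1 ≠ 0 := by positivity
  simpa [sub_ne, add_ne] using difference

lemma assocLegendreInner_zero_self (n : ℕ) : assocLegendreInner 0 n n = 2 / (2 * n + 1) := by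
  have rodrigues : assocLegendreInner 0 n n = (1 / ((2 : ℝ) ^ n * n.factorial)) ^ 2 *
      ∫ x in (-1 : ℝ)..1, (derivative^[n] ((X ^ 2 - 1) ^ n) *
        derivative^[n] ((X ^ 2 - 1) ^ n : ℝ[X])).eval x := by
    rw [assocLegendreInner, ← intervalIntegral.integral_const_mul]
    simp only [legendrePoly, Function.iterate_zero_apply, eval_mul, eval_C, pow_zero, eval_one]
    congr! 2
    ring
  have parts := integral_eval_iterate_derivative_mul (p := ((X ^ 2 - 1) ^ n : ℝ[X]))
    (fun _ hj => isRoot_iterate_derivative_X_sq_sub_one_pow hj (x := -1) (by norm_num))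
    (fun _ hj => isRoot_iterate_derivative_X_sq_sub_one_pow hj (one_pow 2))
    (derivative^[n] ((X ^ 2 - 1) ^ n))
  have integral_weight : (-1) ^ n * ∫ x in (-1 : ℝ)..1, (x ^ 2 - 1) ^ n =
      2 ^ (2 * n + 1) * (n.factorial : ℝ) ^ 2 / (2 * n + 1).factorial := by
    rw [← integral_one_sub_sq_pow, ← intervalIntegral.integral_const_mul]
    simp only [← mul_pow, neg_one_mul, neg_sub]
  rw [← Function.iterate_add_apply, ← two_mul, iterate_derivative_two_mul_X_sq_sub_one_pow] at parts
  simp only [eval_mul, eval_pow, eval_sub, eval_X, eval_one, eval_C,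
    intervalIntegral.integral_mul_const] at parts
  simp only [eval_mul] at rodrigues
  rw [rodrigues, parts, ← mul_assoc, ← mul_assoc, mul_assoc _ ((-1 : ℝ) ^ n), integral_weight,
    Nat.factorial_succ]
  push_cast
  field_simp
  ring

lemma assocLegendreInner_eq {m n : ℕ} (n' : ℕ) (hm : m ≤ n) :
    assocLegendreInner m n n' =
      if n = n' then
        2 / (2 * (n : ℝ) + 1) * (((n + m).factorial : ℝ) / ((n - m).factorial : ℝ)) else 0 := by
  induction m with
  | zero =>
    split_ifs with h
    · subst h
      rw [assocLegendreInner_zero_self, add_zero, Nat.sub_zero, div_self (by positivity), mul_one]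
    · exact assocLegendreInner_zero_of_ne h
  | succ m ih =>
    have fact_sub : ((n - m).factorial : ℝ) = (n - m) * (n - (m + 1)).factorial := by
      rw [show n - m = n - (m + 1) + 1 by omega, Nat.factorial_succ]
      push_cast [Nat.cast_sub hm]
      ring
    have sub_ne : (n : ℝ) - m ≠ 0 := sub_ne_zero.mpr (by exact_mod_cast (show n ≠ m by omega))
    rw [assocLegendreInner_succ, ih (by omega), mul_ite, mul_zero, fact_sub, ← add_assoc,
      Nat.factorial_succ]
    push_cast
    congr 1
    field_simp

end Legendre

section Harmonics

open Real

/-- The phase that turns `cos (m φ)` into the longitudinal factor of `Y_n^m`, see `azimuthMode`. -/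
def azimuthPhase (m : ℤ) : ℝ := if 0 ≤ m then 0 else π / 2

/-- The longitudinal factor of `Y_n^m`: it is `cos (m φ)` for `0 ≤ m` and `sin (|m| φ)` for
`m < 0`. -/
def azimuthMode (m : ℤ) (φ : ℝ) : ℝ := cos (m * φ + azimuthPhase m)

/-- The Neumann factor `ε_m` of Fourier analysis: `azimuthMode m` has square integral `2π / ε_m`
over a period. -/
def neumannFactor (m : ℤ) : ℝ := if m = 0 then 1 else 2

lemma neumannFactor_pos (m : ℤ) : 0 < neumannFactor m := by
  unfold neumannFactor
  split_ifs <;> norm_num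

lemma azimuthMode_of_nonneg {m : ℤ} (hm : 0 ≤ m) (φ : ℝ) : azimuthMode m φ = cos (m * φ) := by
  rw [azimuthMode, azimuthPhase, if_pos hm, add_zero]

lemma azimuthMode_of_neg {m : ℤ} (hm : m < 0) (φ : ℝ) : azimuthMode m φ = -sin (m * φ) := by
  rw [azimuthMode, azimuthPhase, if_neg hm.not_ge, cos_add_pi_div_two]

lemma continuous_azimuthMode (m : ℤ) : Continuous (azimuthMode m) := by
  unfold azimuthMode
  fun_prop

lemma azimuthMode_add_two_pi (m : ℤ) (φ : ℝ) : azimuthMode m (φ + 2 * π) = azimuthMode m φ := by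
  rw [azimuthMode, mul_add, add_right_comm, cos_add_int_mul_two_pi, azimuthMode]

lemma hasDerivAt_azimuthMode (m : ℤ) (φ : ℝ) :
    HasDerivAt (azimuthMode m) (-m * azimuthMode (-m) φ) φ := by
  have deriv_cos := (((hasDerivAt_id φ).const_mul (m : ℝ)).add_const (azimuthPhase m)).cos
  refine deriv_cos.congr_deriv ?_
  rcases lt_trichotomy m 0 with hm | rfl | hm
  · rw [azimuthMode_of_nonneg (by omega), azimuthPhase, if_neg hm.not_ge, id, sin_add_pi_div_two,
      Int.cast_neg, neg_mul (m : ℝ) φ, cos_neg]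
    ring
  · simp
  · rw [azimuthMode_of_neg (by omega), azimuthPhase, if_pos hm.le, id, add_zero, Int.cast_neg,
      neg_mul (m : ℝ) φ, sin_neg]
    ring

lemma integral_cos_int_mul_add (k : ℤ) (δ : ℝ) :
    ∫ φ in (0 : ℝ)..2 * π, cos (k * φ + δ) = if k = 0 then 2 * π * cos δ else 0 := by
  split_ifs with hk
  · simp [hk]
  · rw [intervalIntegral.integral_comp_mul_add _ (Int.cast_ne_zero.mpr hk), integral_cos,
      mul_zero, zero_add, add_comm, sin_add_int_mul_two_pi, sub_self, smul_zero]

lemma integral_azimuthMode_mul (m m' : ℤ) :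
    ∫ φ in (0 : ℝ)..2 * π, azimuthMode m φ * azimuthMode m' φ =
      if m = m' then 2 * π / neumannFactor m else 0 := by
  have product_to_sum (φ : ℝ) : azimuthMode m φ * azimuthMode m' φ =
      (cos ((m - m' : ℤ) * φ + (azimuthPhase m - azimuthPhase m')) +
        cos ((m + m' : ℤ) * φ + (azimuthPhase m + azimuthPhase m'))) / 2 := by
    rw [azimuthMode, azimuthMode, cos_add_cos]
    push_cast
    rw [mul_assoc, mul_div_cancel_left₀ _ two_ne_zero, ← cos_neg (m' * φ + _)]
    congr 2 <;> ring
  simp only [product_to_sum, intervalIntegral.integral_div]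
  rw [intervalIntegral.integral_add (Continuous.intervalIntegrable (by fun_prop) _ _)
    (Continuous.intervalIntegrable (by fun_prop) _ _), integral_cos_int_mul_add,
    integral_cos_int_mul_add]
  simp only [sub_eq_zero, neumannFactor]
  rcases eq_or_ne m m' with rfl | hne
  · rcases eq_or_ne m 0 with rfl | hm
    · simp [azimuthPhase]
    · simp [hm, show m + m ≠ 0 by omega]
  · rcases eq_or_ne (m + m') 0 with hsum | hsum
    · have phase_sum : azimuthPhase m + azimuthPhase m' = π / 2 := by
        unfold azimuthPhase
        split_ifs <;> first | omega | simp
      simp [hne, phase_sum]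
    · simp [hne, hsum]

/-- The factor that normalizes `Y_n^m` in `L²`. -/
def harmonicNorm (n : ℕ) (m : ℤ) : ℝ :=
  √(neumannFactor m * ((2 * n + 1) / (4 * π) *
    (((n - m.natAbs).factorial : ℝ) / ((n + m.natAbs).factorial : ℝ))))

lemma harmonicNorm_pos (n : ℕ) (m : ℤ) : 0 < harmonicNorm n m :=
  sqrt_pos.mpr (mul_pos (neumannFactor_pos m) (by positivity))

lemma harmonicNorm_neg (n : ℕ) (m : ℤ) : harmonicNorm n (-m) = harmonicNorm n m := by
  simp only [harmonicNorm, neumannFactor, Int.natAbs_neg, neg_eq_zero]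

lemma harmonicNorm_sq_mul_assocLegendreInner {n : ℕ} {m : ℤ} (hm : |m| ≤ n) :
    harmonicNorm n m ^ 2 * assocLegendreInner m.natAbs n n = neumannFactor m / (2 * π) := by
  have neumann_pos := neumannFactor_pos m
  rw [Int.abs_eq_natAbs] at hm
  rw [harmonicNorm, sq_sqrt (by positivity), assocLegendreInner_eq n (by omega), if_pos rfl]
  field_simp
  ring

/-- The colatitudinal factor of `Y_n^m`, including the normalization. -/
def colatMode (n : ℕ) (m : ℤ) (θ : ℝ) : ℝ :=
  harmonicNorm n m *
    (|sin θ| ^ m.natAbs * (Polynomial.derivative^[m.natAbs] (legendrePoly n)).eval (cos θ))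

lemma colatMode_neg (n : ℕ) (m : ℤ) : colatMode n (-m) = colatMode n m := by
  ext θ
  rw [colatMode, colatMode, harmonicNorm_neg, Int.natAbs_neg]

lemma colatMode_eq_zero {n : ℕ} {m : ℤ} (h : (n : ℤ) < |m|) (θ : ℝ) : colatMode n m θ = 0 := by
  rw [Int.abs_eq_natAbs] at h
  rw [colatMode, iterate_derivative_legendrePoly_eq_zero (by omega)]
  simp

lemma continuous_colatMode (n : ℕ) (m : ℤ) : Continuous (colatMode n m) := by
  unfold colatMode
  fun_prop

lemma neg_one_pow_mul_assocLegP_cos (n k : ℕ) (θ : ℝ) :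
    (-1) ^ k * assocLegP n k (cos θ) =
      |sin θ| ^ k * (Polynomial.derivative^[k] (legendrePoly n)).eval (cos θ) := by
  have sin_pow : (1 - cos θ ^ 2) ^ ((k : ℝ) / 2) = |sin θ| ^ k := by
    rw [abs_sin_eq_sqrt_one_sub_cos_sq, rpow_div_two_eq_sqrt _
      (sub_nonneg.mpr (cos_sq_le_one θ)), rpow_natCast]
  rw [assocLegP, sin_pow, legP_eq_eval_legendrePoly, iteratedDeriv_polynomial_eval, mul_assoc,
    ← mul_assoc, ← mul_pow, neg_one_mul, neg_neg, one_pow, one_mul]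

lemma Ynm_eq_colatMode_mul_azimuthMode (n : ℕ) (m : ℤ) (θ φ : ℝ) :
    Ynm n m θ φ = colatMode n m θ * azimuthMode m φ := by
  rcases lt_trichotomy m 0 with hm | rfl | hm
  · have natAbs_eq : (m.natAbs : ℝ) = -m := by
      rw [Nat.cast_natAbs, abs_of_neg hm, Int.cast_neg]
    rw [Ynm, if_neg hm.ne, if_neg hm.not_gt, colatMode, azimuthMode_of_neg hm, harmonicNorm,
      neumannFactor, if_neg hm.ne, sqrt_mul zero_le_two, ← neg_one_pow_mul_assocLegP_cos,
      natAbs_eq, neg_mul, sin_neg]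
    ring
  · simp [Ynm, colatMode, azimuthMode, azimuthPhase, harmonicNorm, neumannFactor,
      legP_eq_eval_legendrePoly, n.factorial_ne_zero]
  · have natAbs_eq : (m.natAbs : ℝ) = m := by rw [Nat.cast_natAbs, abs_of_pos hm]
    rw [Ynm, if_neg hm.ne', if_pos hm, colatMode, azimuthMode_of_nonneg hm.le, harmonicNorm,
      neumannFactor, if_neg hm.ne', sqrt_mul zero_le_two, ← neg_one_pow_mul_assocLegP_cos,
      natAbs_eq]
    ring

lemma continuous_uncurry_Ynm (n : ℕ) (m : ℤ) : Continuous (Function.uncurry (Ynm n m)) := by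
  have factors : Function.uncurry (Ynm n m) = fun q => colatMode n m q.1 * azimuthMode m q.2 :=
    funext fun q => Ynm_eq_colatMode_mul_azimuthMode n m q.1 q.2
  rw [factors]
  exact ((continuous_colatMode n m).comp continuous_fst).mul
    ((continuous_azimuthMode m).comp continuous_snd)

lemma Ynm_eq_zero {n : ℕ} {m : ℤ} (h : (n : ℤ) < |m|) (θ φ : ℝ) : Ynm n m θ φ = 0 := by
  rw [Ynm_eq_colatMode_mul_azimuthMode, colatMode_eq_zero h, zero_mul]

lemma integral_comp_cos_mul_sin {f : ℝ → ℝ} (hf : Continuous f) :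
    ∫ θ in (0 : ℝ)..π, f (cos θ) * sin θ = ∫ x in (-1 : ℝ)..1, f x := by
  have substitution := intervalIntegral.integral_comp_mul_deriv (a := 0) (b := π)
    (fun θ _ => hasDerivAt_cos θ) (by fun_prop) hf
  simp only [cos_zero, cos_pi, Function.comp_apply, mul_neg, intervalIntegral.integral_neg]
    at substitution
  rw [intervalIntegral.integral_symm 1, ← substitution, neg_neg]

lemma integral_colatMode_mul (n n' : ℕ) (m : ℤ) :
    ∫ θ in (0 : ℝ)..π, colatMode n m θ * colatMode n' m θ * sin θ =
      harmonicNorm n m * harmonicNorm n' m * assocLegendreInner m.natAbs n n' := by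
  have polynomial_integrand (θ : ℝ) : colatMode n m θ * colatMode n' m θ * sin θ =
      harmonicNorm n m * harmonicNorm n' m * (((1 - Polynomial.X ^ 2) ^ m.natAbs *
        Polynomial.derivative^[m.natAbs] (legendrePoly n) *
        Polynomial.derivative^[m.natAbs] (legendrePoly n')).eval (cos θ) * sin θ) := by
    have sin_pow : (1 - cos θ ^ 2) ^ m.natAbs = |sin θ| ^ m.natAbs * |sin θ| ^ m.natAbs := by
      rw [← sin_sq, ← mul_pow, abs_mul_abs_self, sq]
    simp only [colatMode, Polynomial.eval_mul, Polynomial.eval_pow, Polynomial.eval_sub,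
      Polynomial.eval_one, Polynomial.eval_X, sin_pow]
    ring
  simp only [polynomial_integrand, intervalIntegral.integral_const_mul]
  rw [integral_comp_cos_mul_sin (Polynomial.continuous _), assocLegendreInner]

lemma integral_colatMode_mul_eq_ite {n : ℕ} (n' : ℕ) {m : ℤ} (hm : |m| ≤ n) :
    ∫ θ in (0 : ℝ)..π, colatMode n m θ * colatMode n' m θ * sin θ =
      if n = n' then neumannFactor m / (2 * π) else 0 := by
  rw [integral_colatMode_mul]
  split_ifs with h
  · rw [← h, ← sq, harmonicNorm_sq_mul_assocLegendreInner hm]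
  · rw [Int.abs_eq_natAbs] at hm
    rw [assocLegendreInner_eq n' (by omega), if_neg h, mul_zero]

end Harmonics

section SquareIntegrable

variable {α ι : Type*} [MeasurableSpace α] {μ : Measure α} {e : ι → α → ℝ} {g : α → ℝ}

lemma summable_sq_integral_mul_of_orthonormal [DecidableEq ι] (he : ∀ i, MemLp (e i) 2 μ)
    (orthonormal : ∀ i j, ∫ x, e i x * e j x ∂μ = if i = j then 1 else 0) (hg : MemLp g 2 μ) :
    Summable fun i => (∫ x, g x * e i x ∂μ) ^ 2 := by
  have inner_toLp {u v : α → ℝ} (hu : MemLp u 2 μ) (hv : MemLp v 2 μ) :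
      inner ℝ (hu.toLp u) (hv.toLp v) = ∫ x, v x * u x ∂μ := by
    rw [L2.inner_def]
    refine integral_congr_ae ?_
    filter_upwards [hu.coeFn_toLp, hv.coeFn_toLp] with x hux hvx
    rw [hux, hvx, real_inner_eq_re_inner, RCLike.inner_apply, conj_trivial, RCLike.re_to_real]
  have orthonormal_toLp : Orthonormal ℝ fun i => (he i).toLp (e i) := by
    rw [orthonormal_iff_ite]
    intro i j
    rw [inner_toLp, orthonormal j i]
    exact if_congr eq_comm rfl rfl
  simpa only [inner_toLp, Real.norm_eq_abs, sq_abs] using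
    orthonormal_toLp.inner_products_summable (hg.toLp g)

lemma hasSum_integral_tsum_mul [Countable ι] (he : ∀ i, MemLp (e i) 2 μ) {C : ℝ}
    (norm_le : ∀ i, ∫ x, e i x ^ 2 ∂μ ≤ C) (hg : MemLp g 2 μ) {a : ι → ℝ} (ha : Summable a) :
    HasSum (fun i => a i * ∫ x, e i x * g x ∂μ) (∫ x, (∑' i, a i * e i x) * g x ∂μ) := by
  have integrable_term (i : ι) : Integrable (fun x => a i * (e i x * g x)) μ :=
    ((he i).integrable_mul hg).const_mul (a i)
  have norm_integral_le (i : ι) :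
      ∫ x, ‖a i * (e i x * g x)‖ ∂μ ≤ |a i| * ((C + ∫ x, g x ^ 2 ∂μ) / 2) := by
    have young (x : α) : |e i x * g x| ≤ (e i x ^ 2 + g x ^ 2) / 2 := by
      rw [abs_mul, ← sq_abs (e i x), ← sq_abs (g x)]
      linarith [two_mul_le_add_sq |e i x| |g x|]
    simp only [norm_mul, Real.norm_eq_abs, integral_const_mul, ← abs_mul (e i _)]
    gcongr
    calc ∫ x, |e i x * g x| ∂μ ≤ ∫ x, (e i x ^ 2 + g x ^ 2) / 2 ∂μ :=
          integral_mono ((he i).integrable_mul hg).abs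
            (((he i).integrable_sq.add hg.integrable_sq).div_const 2) young
      _ = (∫ x, e i x ^ 2 ∂μ + ∫ x, g x ^ 2 ∂μ) / 2 := by
          rw [integral_div, integral_add (he i).integrable_sq hg.integrable_sq]
      _ ≤ (C + ∫ x, g x ^ 2 ∂μ) / 2 := by linarith [norm_le i]
  have summable_norm : Summable fun i => ∫ x, ‖a i * (e i x * g x)‖ ∂μ :=
    (ha.abs.mul_right _).of_nonneg_of_le (fun i => integral_nonneg fun x => norm_nonneg _)
      norm_integral_le
  have hasSum_integral := hasSum_integral_of_summable_integral_norm integrable_term summable_norm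
  simp only [← mul_assoc, tsum_mul_right] at hasSum_integral
  simpa only [mul_assoc, integral_const_mul] using hasSum_integral

end SquareIntegrable

section SphereMeasure

open Real Set Function

/-- The surface measure `sin θ dθ dφ` of the sphere, as a measure on the coordinates `(θ, φ)`
carried by `(0, π] × (0, 2π]`. -/
def sphereMeasure : Measure (ℝ × ℝ) :=
  (volume.restrict (Ioc 0 π ×ˢ Ioc 0 (2 * π))).withDensity fun q => ENNReal.ofReal (sin q.1)

lemma integrableOn_Ioc_prod_Ioc {F : ℝ × ℝ → ℝ} (hF : Continuous F) (a b c d : ℝ) :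
    IntegrableOn F (Ioc a b ×ˢ Ioc c d) :=
  (hF.continuousOn.integrableOn_compact (isCompact_Icc.prod isCompact_Icc)).mono_set
    (prod_mono Ioc_subset_Icc_self Ioc_subset_Icc_self)

instance : IsFiniteMeasure sphereMeasure := by
  have continuous_density : Continuous fun q : ℝ × ℝ => sin q.1 := by fun_prop
  exact isFiniteMeasure_withDensity_ofReal
    (integrableOn_Ioc_prod_Ioc continuous_density 0 π 0 (2 * π)).integrable.2

lemma sphereMeasure_absolutelyContinuous :
    sphereMeasure ≪ volume.restrict (Ioc 0 π ×ˢ Ioc 0 (2 * π)) :=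
  withDensity_absolutelyContinuous _ _

lemma ae_sphereMeasure_mem :
    ∀ᵐ q ∂sphereMeasure, q ∈ Icc 0 π ×ˢ Icc 0 (2 * π) :=
  sphereMeasure_absolutelyContinuous.ae_le <|
    (ae_restrict_mem (measurableSet_Ioc.prod measurableSet_Ioc)).mono
      fun _ hq => prod_mono Ioc_subset_Icc_self Ioc_subset_Icc_self hq

lemma memLp_sphereMeasure {F : ℝ × ℝ → ℝ} (hF : Continuous F) (p : ℝ≥0∞) :
    MemLp F p sphereMeasure := by
  obtain ⟨C, hC⟩ := (isCompact_Icc.prod isCompact_Icc).exists_bound_of_continuousOn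
    (s := Icc 0 π ×ˢ Icc 0 (2 * π)) hF.continuousOn
  exact .of_bound hF.aestronglyMeasurable C (ae_sphereMeasure_mem.mono hC)

lemma integral_sphereMeasure {F : ℝ × ℝ → ℝ} (hF : Continuous F) :
    ∫ q, F q ∂sphereMeasure =
      ∫ θ in (0 : ℝ)..π, (∫ φ in (0 : ℝ)..2 * π, F (θ, φ)) * sin θ := by
  have continuous_mul_sin : Continuous fun q : ℝ × ℝ => F q * sin q.1 := by fun_prop
  rw [sphereMeasure, integral_withDensity_eq_integral_toReal_smul (by fun_prop)
    (ae_of_all _ fun _ => ENNReal.ofReal_lt_top)]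
  calc ∫ q in Ioc 0 π ×ˢ Ioc 0 (2 * π), (ENNReal.ofReal (sin q.1)).toReal • F q
      = ∫ q in Ioc 0 π ×ˢ Ioc 0 (2 * π), F q * sin q.1 := by
        refine setIntegral_congr_fun (by measurability) fun q hq => ?_
        simp only [ENNReal.toReal_ofReal (sin_nonneg_of_nonneg_of_le_pi hq.1.1.le hq.1.2),
          smul_eq_mul, mul_comm]
    _ = ∫ θ in Ioc 0 π, ∫ φ in Ioc 0 (2 * π), F (θ, φ) * sin θ :=
        setIntegral_prod _ (integrableOn_Ioc_prod_Ioc continuous_mul_sin _ _ _ _)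
    _ = ∫ θ in (0 : ℝ)..π, (∫ φ in (0 : ℝ)..2 * π, F (θ, φ)) * sin θ := by
        simp only [integral_mul_const, intervalIntegral.integral_of_le pi_nonneg,
          intervalIntegral.integral_of_le two_pi_pos.le]

lemma sInner_eq_integral_sphereMeasure {u v : SphereFun} (hu : Continuous (uncurry u))
    (hv : Continuous (uncurry v)) :
    sInner u v = ∫ q, u q.1 q.2 * v q.1 q.2 ∂sphereMeasure := by
  have continuous_mul : Continuous fun q : ℝ × ℝ => u q.1 q.2 * v q.1 q.2 := hu.mul hv
  have continuous_swapped : Continuous (uncurry fun φ θ => u θ φ * v θ φ * sin θ) :=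
    (continuous_mul.comp continuous_swap).mul (continuous_sin.comp continuous_snd)
  rw [integral_sphereMeasure continuous_mul, sInner, intervalIntegral_intervalIntegral_swap]
  · simp only [intervalIntegral.integral_mul_const]
  · simpa only [uIoc_of_le pi_nonneg, uIoc_of_le two_pi_pos.le] using
      integrableOn_Ioc_prod_Ioc continuous_swapped 0 (2 * π) 0 π

lemma coeff_eq_zero {n : ℕ} {m : ℤ} (h : (n : ℤ) < |m|) (f : SphereFun) : coeff f n m = 0 := by
  simp [coeff, sInner, Ynm_eq_zero h]

lemma coeff_congr {f g : SphereFun} (h : EqOn f g (Icc 0 π)) (n : ℕ) (m : ℤ) :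
    coeff f n m = coeff g n m := by
  refine intervalIntegral.integral_congr fun φ _ => intervalIntegral.integral_congr fun θ hθ => ?_
  rw [uIcc_of_le pi_nonneg] at hθ
  simp only [h hθ]

lemma coeff_eq_integral_sphereMeasure {f : SphereFun} (hf : Continuous (uncurry f)) (n : ℕ)
    (m : ℤ) : coeff f n m = ∫ q, f q.1 q.2 * Ynm n m q.1 q.2 ∂sphereMeasure :=
  sInner_eq_integral_sphereMeasure hf (continuous_uncurry_Ynm n m)

lemma integrable_mul_Ynm {f : SphereFun} (hf : Continuous (uncurry f)) (n : ℕ) (m : ℤ) :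
    Integrable (fun q => f q.1 q.2 * Ynm n m q.1 q.2) sphereMeasure :=
  (memLp_sphereMeasure hf 2).integrable_mul (memLp_sphereMeasure (continuous_uncurry_Ynm n m) 2)

lemma coeff_sub {f g : SphereFun} (hf : Continuous (uncurry f)) (hg : Continuous (uncurry g))
    (n : ℕ) (m : ℤ) :
    coeff (fun θ φ => f θ φ - g θ φ) n m = coeff f n m - coeff g n m := by
  have continuous_sub : Continuous (uncurry fun θ φ => f θ φ - g θ φ) := hf.sub hg
  rw [coeff_eq_integral_sphereMeasure continuous_sub, coeff_eq_integral_sphereMeasure hf,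
    coeff_eq_integral_sphereMeasure hg,
    ← integral_sub (integrable_mul_Ynm hf n m) (integrable_mul_Ynm hg n m)]
  simp only [sub_mul]

/-- The Fourier coefficient of `f θ` against the longitudinal factor of `Y_n^m`. -/
def azimuthCoeff (f : SphereFun) (m : ℤ) (θ : ℝ) : ℝ :=
  ∫ φ in (0 : ℝ)..2 * π, f θ φ * azimuthMode m φ

lemma continuous_azimuthCoeff {f : SphereFun} (hf : Continuous (uncurry f)) (m : ℤ) :
    Continuous (azimuthCoeff f m) := by
  exact intervalIntegral.continuous_parametric_intervalIntegral_of_continuous'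
    (hf.mul ((continuous_azimuthMode m).comp continuous_snd)) 0 (2 * π)

lemma coeff_eq_integral_azimuthCoeff {f : SphereFun} (hf : Continuous (uncurry f)) (n : ℕ)
    (m : ℤ) :
    coeff f n m = ∫ θ in (0 : ℝ)..π, azimuthCoeff f m θ * (colatMode n m θ * sin θ) := by
  have continuous_mul : Continuous fun q : ℝ × ℝ => f q.1 q.2 * Ynm n m q.1 q.2 :=
    hf.mul (continuous_uncurry_Ynm n m)
  rw [coeff_eq_integral_sphereMeasure hf, integral_sphereMeasure continuous_mul]
  refine intervalIntegral.integral_congr fun θ _ => ?_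
  simp only [azimuthCoeff, Ynm_eq_colatMode_mul_azimuthMode, ← mul_assoc,
    ← intervalIntegral.integral_mul_const]
  refine intervalIntegral.integral_congr fun φ _ => ?_
  ring

lemma azimuthCoeff_Ynm (n : ℕ) (m m' : ℤ) (θ : ℝ) :
    azimuthCoeff (Ynm n m) m' θ =
      if m = m' then colatMode n m θ * (2 * π / neumannFactor m) else 0 := by
  simp only [azimuthCoeff, Ynm_eq_colatMode_mul_azimuthMode, mul_assoc (colatMode n m θ),
    intervalIntegral.integral_const_mul, integral_azimuthMode_mul, mul_ite, mul_zero]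

lemma coeff_Ynm {n : ℕ} {m : ℤ} (hm : |m| ≤ n) (n' : ℕ) (m' : ℤ) :
    coeff (Ynm n m) n' m' = if n = n' ∧ m = m' then 1 else 0 := by
  simp only [coeff_eq_integral_azimuthCoeff (continuous_uncurry_Ynm n m), azimuthCoeff_Ynm]
  have neumann_pos := neumannFactor_pos m
  rcases eq_or_ne m m' with rfl | hne
  · have integrand (θ : ℝ) : colatMode n m θ * (2 * π / neumannFactor m) *
        (colatMode n' m θ * sin θ) =
        2 * π / neumannFactor m * (colatMode n m θ * colatMode n' m θ * sin θ) := by ring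
    simp only [if_true, integrand, intervalIntegral.integral_const_mul,
      integral_colatMode_mul_eq_ite n' hm, and_true, mul_ite, mul_zero]
    congr 1
    field_simp
  · simp [hne]

end SphereMeasure

section InverseLaplacian

open Real Set Function

lemma coeff_Ynm_comm (n n' : ℕ) (m m' : ℤ) : coeff (Ynm n m) n' m' = coeff (Ynm n' m') n m := by
  simp only [coeff, sInner, mul_comm (Ynm n m _ _)]

lemma coeff_Ynm_self_le_one (n : ℕ) (m : ℤ) : coeff (Ynm n m) n m ≤ 1 := by
  rcases lt_or_ge (n : ℤ) |m| with h | h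
  · rw [coeff_eq_zero h]
    exact zero_le_one
  · rw [coeff_Ynm h, if_pos ⟨rfl, rfl⟩]

lemma invLap_congr {f g : SphereFun} (h : EqOn f g (Icc 0 π)) : invLap f = invLap g := by
  ext θ φ
  simp only [invLap, coeff_congr h]

lemma summable_coeff_sq {f : SphereFun} (hf : Continuous (uncurry f)) :
    Summable fun p : ℕ × ℤ => coeff f p.1 p.2 ^ 2 := by
  let admissible : Set (ℕ × ℤ) := {p | |p.2| ≤ p.1}
  have orthonormal (p q : admissible) :
      ∫ x, Ynm p.1.1 p.1.2 x.1 x.2 * Ynm q.1.1 q.1.2 x.1 x.2 ∂sphereMeasure =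
        if p = q then 1 else 0 := by
    rw [← coeff_eq_integral_sphereMeasure (continuous_uncurry_Ynm _ _), coeff_Ynm p.2]
    exact if_congr (by rw [Subtype.ext_iff, Prod.ext_iff]) rfl rfl
  have bessel := summable_sq_integral_mul_of_orthonormal
    (fun p : admissible => memLp_sphereMeasure (continuous_uncurry_Ynm p.1.1 p.1.2) 2) orthonormal
    (memLp_sphereMeasure hf 2)
  simp only [uncurry, ← coeff_eq_integral_sphereMeasure hf] at bessel
  refine (Subtype.val_injective.summable_iff fun p hp => ?_).mp bessel
  have not_admissible : ¬|p.2| ≤ p.1 := by simpa [admissible] using hp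
  rw [coeff_eq_zero (not_le.mp not_admissible), sq, mul_zero]

lemma sq_one_div_mul_succ_le {n : ℕ} {m : ℤ} (hm : |m| ≤ n) :
    (1 / ((n : ℝ) * (n + 1))) ^ 2 ≤
      4 * (1 / |(n : ℝ) + 1| ^ (2 : ℝ) * (1 / |(m : ℝ) + 1 / 2| ^ (2 : ℝ))) := by
  rcases Nat.eq_zero_or_pos n with rfl | hn
  · simp only [Nat.cast_zero, zero_mul, div_zero, ne_eq, OfNat.ofNat_ne_zero, not_false_eq_true,
      zero_pow]
    positivity
  have one_le : (1 : ℝ) ≤ n := by exact_mod_cast hn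
  have abs_cast_le : |(m : ℝ)| ≤ n := by exact_mod_cast hm
  have order_ne : (m : ℝ) + 1 / 2 ≠ 0 := fun h => by
    have : (2 * m + 1 : ℤ) = 0 := by exact_mod_cast (by linarith : 2 * (m : ℝ) + 1 = 0)
    omega
  have order_sq_le : ((m : ℝ) + 1 / 2) ^ 2 ≤ 4 * n ^ 2 := by
    rw [abs_le] at abs_cast_le
    nlinarith
  rw [rpow_two, rpow_two, sq_abs, sq_abs]
  calc (1 / ((n : ℝ) * (n + 1))) ^ 2 = 4 * (1 / ((n : ℝ) + 1) ^ 2 * (1 / (4 * (n : ℝ) ^ 2))) := by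
        field_simp
    _ ≤ 4 * (1 / ((n : ℝ) + 1) ^ 2 * (1 / ((m : ℝ) + 1 / 2) ^ 2)) := by
        have := one_div_le_one_div_of_le (by positivity) order_sq_le
        gcongr

lemma summable_coeff_div {f : SphereFun} (hf : Continuous (uncurry f)) :
    Summable fun p : ℕ × ℤ => coeff f p.1 p.2 / ((p.1 : ℝ) * (p.1 + 1)) := by
  have summable_bound : Summable fun p : ℕ × ℤ =>
      1 / |(p.1 : ℝ) + 1| ^ (2 : ℝ) * (1 / |(p.2 : ℝ) + 1 / 2| ^ (2 : ℝ)) :=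
    ((Real.summable_one_div_nat_add_rpow 1 2).mpr one_lt_two).mul_of_nonneg
      ((Real.summable_one_div_int_add_rpow (1 / 2) 2).mpr one_lt_two)
      (fun _ => by positivity) (fun _ => by positivity)
  have summable_sum : Summable fun p : ℕ × ℤ => coeff f p.1 p.2 ^ 2 +
      4 * (1 / |(p.1 : ℝ) + 1| ^ (2 : ℝ) * (1 / |(p.2 : ℝ) + 1 / 2| ^ (2 : ℝ))) :=
    (summable_coeff_sq hf).add (summable_bound.mul_left 4)
  refine summable_sum.of_norm_bounded fun p => ?_
  rcases lt_or_ge (p.1 : ℤ) |p.2| with hp | hp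
  · rw [coeff_eq_zero hp, zero_div, norm_zero]
    positivity
  · set w := 1 / ((p.1 : ℝ) * (p.1 + 1)) with w_def
    have young : |coeff f p.1 p.2| * w ≤ coeff f p.1 p.2 ^ 2 + w ^ 2 := by
      rw [← sq_abs (coeff f p.1 p.2)]
      nlinarith [sq_nonneg (|coeff f p.1 p.2| - w), sq_nonneg |coeff f p.1 p.2|, sq_nonneg w]
    rw [div_eq_mul_one_div, norm_mul, norm_eq_abs, norm_of_nonneg (by positivity), ← w_def]
    exact young.trans (add_le_add_right (sq_one_div_mul_succ_le hp) _)

-- The `n = 0` terms vanish because of the junk value `x / 0 = 0`.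
lemma invLap_eq_tsum (f : SphereFun) (θ φ : ℝ) :
    invLap f θ φ =
      ∑' p : ℕ × ℤ, -(coeff f p.1 p.2 / ((p.1 : ℝ) * (p.1 + 1))) * Ynm p.1 p.2 θ φ := by
  rw [invLap]
  refine tsum_congr fun p => ?_
  split_ifs with hp
  · ring
  · rcases not_and_or.mp hp with hp | hp
    · rw [Nat.lt_one_iff.mp (not_le.mp hp)]
      simp
    · rw [coeff_eq_zero (not_le.mp hp), zero_div, neg_zero, zero_mul]

lemma integral_invLap_mul_Ynm {f : SphereFun} (hf : Continuous (uncurry f)) {n : ℕ} {m : ℤ}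
    (hm : |m| ≤ n) :
    ∫ q, invLap f q.1 q.2 * Ynm n m q.1 q.2 ∂sphereMeasure =
      -(coeff f n m / ((n : ℝ) * (n + 1))) := by
  have self_le_one (p : ℕ × ℤ) : ∫ q, uncurry (Ynm p.1 p.2) q ^ 2 ∂sphereMeasure ≤ 1 := by
    simpa only [coeff_eq_integral_sphereMeasure (continuous_uncurry_Ynm _ _), ← sq, uncurry]
      using coeff_Ynm_self_le_one p.1 p.2
  have hasSum_integral := hasSum_integral_tsum_mul
    (fun p : ℕ × ℤ => memLp_sphereMeasure (continuous_uncurry_Ynm p.1 p.2) 2) self_le_one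
    (memLp_sphereMeasure (continuous_uncurry_Ynm n m) 2) (summable_coeff_div hf).neg
  simp only [uncurry, ← invLap_eq_tsum, ← coeff_eq_integral_sphereMeasure
    (continuous_uncurry_Ynm _ _)] at hasSum_integral
  have term_eq_ite (p : ℕ × ℤ) :
      -(coeff f p.1 p.2 / ((p.1 : ℝ) * (p.1 + 1))) * coeff (Ynm p.1 p.2) n m =
        if p = (n, m) then -(coeff f n m / ((n : ℝ) * (n + 1))) else 0 := by
    rw [coeff_Ynm_comm, coeff_Ynm hm, mul_ite, mul_one, mul_zero]
    split_ifs with h h' h'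
    · rw [h']
    · exact absurd (Prod.ext h.1.symm h.2.symm) h'
    · exact absurd ⟨(congrArg Prod.fst h').symm, (congrArg Prod.snd h').symm⟩ h
    · rfl
  simp only [term_eq_ite] at hasSum_integral
  exact hasSum_integral.unique (hasSum_ite_eq _ _)

end InverseLaplacian

section Completeness

open Polynomial Real Set Function

lemma eqOn_zero_of_forall_integral_mul_eval_eq_zero {a b : ℝ} (hab : a < b) {h : ℝ → ℝ}
    (hh : ContinuousOn h (Icc a b)) (orth : ∀ p : ℝ[X], ∫ x in a..b, h x * p.eval x = 0) :
    EqOn h 0 (Icc a b) := by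
  have hh' : ContinuousOn h (uIcc a b) := by rwa [uIcc_of_le hab.le]
  have integral_sq_le {ε : ℝ} (hε : 0 < ε) : ∫ x in a..b, h x * h x ≤ ε * ∫ x in a..b, |h x| := by
    obtain ⟨p, hp⟩ := exists_polynomial_near_of_continuousOn a b h hh ε hε
    calc ∫ x in a..b, h x * h x = ∫ x in a..b, h x * (h x - p.eval x) := by
          have integral_sub := intervalIntegral.integral_sub (μ := volume)
            (hh'.mul hh').intervalIntegrable (hh'.mul p.continuousOn).intervalIntegrable
          simp only [Pi.mul_apply, orth, sub_zero, ← mul_sub] at integral_sub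
          exact integral_sub.symm
      _ ≤ ∫ x in a..b, ε * |h x| := by
          refine intervalIntegral.integral_mono_on hab.le
            (hh'.mul (hh'.sub p.continuousOn)).intervalIntegrable
            (hh'.abs.const_smul ε).intervalIntegrable fun x hx => (le_abs_self _).trans ?_
          rw [abs_mul, mul_comm ε, abs_sub_comm]
          exact mul_le_mul_of_nonneg_left (hp x hx).le (abs_nonneg _)
      _ = ε * ∫ x in a..b, |h x| := intervalIntegral.integral_const_mul _ _
  have integral_sq_nonpos : ∫ x in a..b, h x * h x ≤ 0 := by
    have continuous_bound : Continuous fun ε : ℝ => ε * ∫ x in a..b, |h x| := by fun_prop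
    have tendsto_bound := (continuous_bound.tendsto 0).mono_left (nhdsWithin_le_nhds (s := Ioi 0))
    rw [zero_mul] at tendsto_bound
    exact ge_of_tendsto tendsto_bound (eventually_mem_nhdsWithin.mono fun ε => integral_sq_le)
  by_contra not_zero
  simp only [EqOn, not_forall] at not_zero
  obtain ⟨x, hx, hne⟩ := not_zero
  exact integral_sq_nonpos.not_gt <| intervalIntegral.integral_pos hab (hh.mul hh)
    (fun _ _ => mul_self_nonneg _) ⟨x, hx, mul_self_pos.mpr hne⟩

lemma integral_mul_cos_add_sin_eq_zero {g : ℝ → ℝ} (orth : ∀ m,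
    ∫ φ in (0 : ℝ)..2 * π, g φ * azimuthMode m φ = 0) (k : ℤ) :
    ∫ φ in (0 : ℝ)..2 * π, g φ * cos (k * φ) = 0 ∧
      ∫ φ in (0 : ℝ)..2 * π, g φ * sin (k * φ) = 0 := by
  rcases lt_trichotomy k 0 with hk | rfl | hk
  · have cos_orth := orth (-k)
    have sin_orth := orth k
    simp only [azimuthMode_of_nonneg (neg_nonneg.mpr hk.le), azimuthMode_of_neg hk, Int.cast_neg,
      neg_mul, cos_neg, mul_neg, intervalIntegral.integral_neg, neg_eq_zero] at cos_orth sin_orth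
    exact ⟨cos_orth, sin_orth⟩
  · simpa [azimuthMode_of_nonneg] using orth 0
  · have cos_orth := orth k
    have sin_orth := orth (-k)
    simp only [azimuthMode_of_nonneg hk.le, azimuthMode_of_neg (neg_lt_zero.mpr hk), Int.cast_neg,
      neg_mul, sin_neg, neg_neg] at cos_orth sin_orth
    exact ⟨cos_orth, sin_orth⟩

lemma eq_zero_of_forall_integral_mul_azimuthMode_eq_zero {g : ℝ → ℝ} (hg : Continuous g)
    (periodic : Periodic g (2 * π))
    (orth : ∀ m, ∫ φ in (0 : ℝ)..2 * π, g φ * azimuthMode m φ = 0) : g = 0 := by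
  have : Fact (0 < 2 * π) := ⟨two_pi_pos⟩
  have periodic_complex : Periodic (fun φ => (g φ : ℂ)) (2 * π) :=
    fun φ => congrArg _ (periodic φ)
  let F : C(AddCircle (2 * π), ℂ) :=
    ⟨periodic_complex.lift, continuous_coinduced_dom.mpr (Complex.continuous_ofReal.comp hg)⟩
  have fourier_mul (k : ℤ) (φ : ℝ) : fourier k (φ : AddCircle (2 * π)) • F φ =
      (g φ * cos (k * φ) : ℝ) + Complex.I * (g φ * sin (k * φ) : ℝ) := by
    have exponent : 2 * π * Complex.I * k * φ / (2 * π : ℝ) = (k * φ : ℝ) * Complex.I := by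
      push_cast
      field_simp [Complex.ofReal_ne_zero.mpr pi_ne_zero]
    have F_apply : F φ = g φ := rfl
    rw [F_apply, fourier_coe_apply, exponent, Complex.exp_mul_I, ← Complex.ofReal_cos,
      ← Complex.ofReal_sin, smul_eq_mul]
    push_cast
    ring
  have fourierCoeff_eq_zero (k : ℤ) : fourierCoeff F k = 0 := by
    obtain ⟨cos_orth, sin_orth⟩ := integral_mul_cos_add_sin_eq_zero orth (-k)
    rw [fourierCoeff_eq_intervalIntegral _ _ 0, zero_add]
    simp only [fourier_mul]
    rw [intervalIntegral.integral_add (Continuous.intervalIntegrable (by fun_prop) _ _)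
      (Continuous.intervalIntegrable (by fun_prop) _ _), intervalIntegral.integral_const_mul,
      intervalIntegral.integral_ofReal, intervalIntegral.integral_ofReal, cos_orth, sin_orth]
    simp
  ext φ
  have fourier_series := has_pointwise_sum_fourier_series_of_summable (f := F)
    (by simpa only [funext fourierCoeff_eq_zero] using summable_zero) φ
  simp only [fourierCoeff_eq_zero, zero_smul] at fourier_series
  exact Complex.ofReal_eq_zero.mp (fourier_series.unique hasSum_zero)

lemma coeff_eq_integral_azimuthCoeff_arccos {f : SphereFun} (hf : Continuous (uncurry f)) (n : ℕ)
    (m : ℤ) :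
    coeff f n m = harmonicNorm n m *
      ∫ x in (-1 : ℝ)..1, azimuthCoeff f m (arccos x) * |sin (arccos x)| ^ m.natAbs *
        (derivative^[m.natAbs] (legendrePoly n)).eval x := by
  have continuous_azimuthCoeff := continuous_azimuthCoeff hf m
  rw [coeff_eq_integral_azimuthCoeff hf, ← integral_comp_cos_mul_sin (by fun_prop),
    ← intervalIntegral.integral_const_mul]
  refine intervalIntegral.integral_congr fun θ hθ => ?_
  rw [uIcc_of_le pi_nonneg] at hθ
  simp only [colatMode, arccos_cos hθ.1 hθ.2]
  ring

lemma azimuthCoeff_eq_zero_of_coeff_eq_zero {f : SphereFun} (hf : Continuous (uncurry f)) {m : ℤ}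
    (hcoeff : ∀ n, coeff f n m = 0) : EqOn (azimuthCoeff f m) 0 (Icc 0 π) := by
  have continuous_azimuthCoeff := continuous_azimuthCoeff hf m
  let weighted (x : ℝ) : ℝ := azimuthCoeff f m (arccos x) * |sin (arccos x)| ^ m.natAbs
  have continuous_weighted : Continuous weighted := by fun_prop
  have orth (p : ℝ[X]) : ∫ x in (-1 : ℝ)..1, weighted x * p.eval x = 0 := by
    have hp : p ∈ Submodule.span ℝ
        (range fun i => derivative^[m.natAbs] (legendrePoly (m.natAbs + i))) :=
      span_iterate_derivative_legendrePoly m.natAbs ▸ Submodule.mem_top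
    induction hp using Submodule.span_induction with
    | mem p hp =>
      obtain ⟨i, rfl⟩ := hp
      have coeff_eq := hcoeff (m.natAbs + i)
      rw [coeff_eq_integral_azimuthCoeff_arccos hf] at coeff_eq
      exact (mul_eq_zero.mp coeff_eq).resolve_left (harmonicNorm_pos _ _).ne'
    | zero => simp
    | add p q _ _ hp hq =>
      simp only [eval_add, mul_add]
      rw [intervalIntegral.integral_add (Continuous.intervalIntegrable (by fun_prop) _ _)
        (Continuous.intervalIntegrable (by fun_prop) _ _), hp, hq, add_zero]
    | smul c p _ hp => simp [mul_left_comm _ c, hp]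
  have weighted_eq_zero := eqOn_zero_of_forall_integral_mul_eval_eq_zero (by norm_num)
    continuous_weighted.continuousOn orth
  have eqOn_interior : EqOn (azimuthCoeff f m) 0 (Ioo 0 π) := fun θ hθ => by
    have weighted_cos := weighted_eq_zero (cos_mem_Icc θ)
    simp only [weighted, arccos_cos hθ.1.le hθ.2.le] at weighted_cos
    exact (mul_eq_zero.mp weighted_cos).resolve_right
      (pow_ne_zero _ (abs_ne_zero.mpr (sin_pos_of_mem_Ioo hθ).ne'))
  rw [← closure_Ioo pi_ne_zero.symm]
  exact eqOn_interior.closure continuous_azimuthCoeff continuous_zero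

theorem eq_zero_of_forall_coeff_eq_zero {f : SphereFun} (hf : Continuous (uncurry f))
    (periodic : PeriodicPhi f) (hcoeff : ∀ n m, coeff f n m = 0) {θ : ℝ} (hθ : θ ∈ Icc 0 π) :
    f θ = 0 :=
  eq_zero_of_forall_integral_mul_azimuthMode_eq_zero (hf.comp (Continuous.prodMk_right θ))
    (periodic θ) fun m => azimuthCoeff_eq_zero_of_coeff_eq_zero hf (fun n => hcoeff n m) hθ

end Completeness

section LongitudeDerivative

open Real Set Function

variable {ω : SphereFun}

lemma hasDerivAt_longitude (hω : ContDiff ℝ 1 (uncurry ω)) (θ φ : ℝ) :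
    HasDerivAt (ω θ) (fderiv ℝ (uncurry ω) (θ, φ) (0, 1)) φ := by
  have uncurry_deriv := (hω.differentiable one_ne_zero (θ, φ)).hasFDerivAt
  exact uncurry_deriv.comp_hasDerivAt φ ((hasDerivAt_const φ θ).prodMk (hasDerivAt_id φ))

lemma hasDerivAt_dPhi (hω : ContDiff ℝ 1 (uncurry ω)) (θ φ : ℝ) :
    HasDerivAt (ω θ) (dPhi ω θ φ) φ :=
  (hasDerivAt_longitude hω θ φ).differentiableAt.hasDerivAt

lemma continuous_uncurry_dPhi (hω : ContDiff ℝ 1 (uncurry ω)) :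
    Continuous (uncurry (dPhi ω)) := by
  have dPhi_eq : uncurry (dPhi ω) = fun q => fderiv ℝ (uncurry ω) q (0, 1) :=
    funext fun q => (hasDerivAt_longitude hω q.1 q.2).deriv
  rw [dPhi_eq]
  exact (hω.continuous_fderiv one_ne_zero).clm_apply continuous_const

lemma periodicPhi_dPhi (hper : PeriodicPhi ω) : PeriodicPhi (dPhi ω) := fun θ φ => by
  rw [dPhi, ← deriv_comp_add_const]
  simp only [hper θ, dPhi]

lemma azimuthCoeff_dPhi (hω : ContDiff ℝ 1 (uncurry ω)) (hper : PeriodicPhi ω) (m : ℤ) (θ : ℝ) :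
    azimuthCoeff (dPhi ω) m θ = m * azimuthCoeff ω (-m) θ := by
  have continuous_dPhi : Continuous (dPhi ω θ) :=
    (continuous_uncurry_dPhi hω).comp (Continuous.prodMk_right θ)
  have continuous_mode_deriv : Continuous fun φ => -m * azimuthMode (-m) φ :=
    continuous_const.mul (continuous_azimuthMode (-m))
  have boundary : azimuthMode m (2 * π) * ω θ (2 * π) = azimuthMode m 0 * ω θ 0 := by
    rw [← zero_add (2 * π), azimuthMode_add_two_pi, hper]
  have by_parts := intervalIntegral.integral_mul_deriv_eq_deriv_mul (a := 0) (b := 2 * π)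
    (fun φ _ => hasDerivAt_azimuthMode m φ) (fun φ _ => hasDerivAt_dPhi hω θ φ)
    (continuous_mode_deriv.intervalIntegrable _ _) (continuous_dPhi.intervalIntegrable _ _)
  simp only [boundary, sub_self, zero_sub, neg_mul, mul_assoc, intervalIntegral.integral_neg,
    intervalIntegral.integral_const_mul, neg_neg] at by_parts
  simpa only [azimuthCoeff, mul_comm] using by_parts

lemma coeff_dPhi (hω : ContDiff ℝ 1 (uncurry ω)) (hper : PeriodicPhi ω) (n : ℕ) (m : ℤ) :
    coeff (dPhi ω) n m = m * coeff ω n (-m) := by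
  simp only [coeff_eq_integral_azimuthCoeff (continuous_uncurry_dPhi hω),
    coeff_eq_integral_azimuthCoeff hω.continuous, azimuthCoeff_dPhi hω hper, colatMode_neg,
    mul_assoc, intervalIntegral.integral_const_mul]

end LongitudeDerivative

section HarmonicSum

open Real Set Function

/-- The spherical harmonic of degree `N` with coefficients `c m`, `|m| ≤ N`. -/
def harmonicSum (N : ℕ) (c : ℤ → ℝ) : SphereFun :=
  fun θ φ => ∑ m ∈ Finset.Icc (-(N : ℤ)) N, c m * Ynm N m θ φ

lemma continuous_uncurry_harmonicSum (N : ℕ) (c : ℤ → ℝ) :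
    Continuous (uncurry (harmonicSum N c)) := by
  have continuous_term (m : ℤ) : Continuous fun q => c m * uncurry (Ynm N m) q :=
    continuous_const.mul (continuous_uncurry_Ynm N m)
  exact continuous_finsetSum (Finset.Icc (-(N : ℤ)) N) fun m _ => continuous_term m

lemma periodicPhi_harmonicSum (N : ℕ) (c : ℤ → ℝ) : PeriodicPhi (harmonicSum N c) := fun θ φ => by
  simp only [harmonicSum, Ynm_eq_colatMode_mul_azimuthMode, azimuthMode_add_two_pi]

lemma hasDerivAt_Ynm (n : ℕ) (m : ℤ) (θ φ : ℝ) :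
    HasDerivAt (Ynm n m θ) (-m * Ynm n (-m) θ φ) φ := by
  rw [funext (Ynm_eq_colatMode_mul_azimuthMode n m θ), Ynm_eq_colatMode_mul_azimuthMode,
    colatMode_neg, mul_left_comm]
  exact (hasDerivAt_azimuthMode m φ).const_mul _

lemma hasDerivAt_harmonicSum (N : ℕ) (c : ℤ → ℝ) (θ φ : ℝ) :
    HasDerivAt (harmonicSum N c θ) (harmonicSum N (fun m => m * c (-m)) θ φ) φ := by
  have deriv_sum := HasDerivAt.fun_sum fun m (_ : m ∈ Finset.Icc (-(N : ℤ)) N) =>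
    (hasDerivAt_Ynm N m θ φ).const_mul (c m)
  refine deriv_sum.congr_deriv (Finset.sum_equiv (Equiv.neg ℤ) (fun m => ?_) fun m _ => ?_)
  · simp only [Finset.mem_Icc, Equiv.neg_apply]
    omega
  · simp only [Equiv.neg_apply, neg_neg, Int.cast_neg]
    ring

lemma coeff_harmonicSum (N : ℕ) (c : ℤ → ℝ) (n : ℕ) (m : ℤ) :
    coeff (harmonicSum N c) n m = if n = N ∧ |m| ≤ N then c m else 0 := by
  have coeff_eq_sum : coeff (harmonicSum N c) n m =
      ∑ k ∈ Finset.Icc (-(N : ℤ)) N, c k * coeff (Ynm N k) n m := by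
    simp only [coeff_eq_integral_sphereMeasure (continuous_uncurry_harmonicSum N c),
      coeff_eq_integral_sphereMeasure (continuous_uncurry_Ynm N _), harmonicSum, Finset.sum_mul,
      ← integral_const_mul, mul_assoc]
    exact integral_finsetSum _ fun k _ =>
      (integrable_mul_Ynm (continuous_uncurry_Ynm N k) n m).const_mul (c k)
  have coeff_Ynm_of_mem (k : ℤ) (hk : k ∈ Finset.Icc (-(N : ℤ)) N) :
      c k * coeff (Ynm N k) n m = if k = m then (if n = N then c m else 0) else 0 := by
    rw [coeff_Ynm (abs_le.mpr (Finset.mem_Icc.mp hk))]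
    split_ifs <;> grind
  rw [coeff_eq_sum, Finset.sum_congr rfl coeff_Ynm_of_mem, Finset.sum_ite_eq']
  simp only [Finset.mem_Icc, ← abs_le, ite_and]
  split_ifs <;> rfl

lemma invLap_harmonicSum (N : ℕ) (c : ℤ → ℝ) (θ φ : ℝ) :
    invLap (harmonicSum N c) θ φ = -(harmonicSum N c θ φ / ((N : ℝ) * (N + 1))) := by
  rw [invLap_eq_tsum, tsum_eq_sum (s := {N} ×ˢ Finset.Icc (-(N : ℤ)) N) fun p hp => ?_]
  · rw [Finset.sum_product, Finset.sum_singleton, harmonicSum, Finset.sum_div,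
      ← Finset.sum_neg_distrib]
    refine Finset.sum_congr rfl fun m hm => ?_
    rw [coeff_harmonicSum, if_pos ⟨rfl, abs_le.mpr (Finset.mem_Icc.mp hm)⟩]
    ring
  · rw [coeff_harmonicSum, if_neg fun h => hp ?_, zero_div, neg_zero, zero_mul]
    exact Finset.mem_product.mpr ⟨Finset.mem_singleton.mpr h.1, Finset.mem_Icc.mpr (abs_le.mp h.2)⟩

end HarmonicSum

section Kernel

open Real Set Function

lemma coeff_eq_mul_div_of_ae_add_invLap_eq_zero {f : SphereFun} (hf : Continuous (uncurry f))
    {lam : ℝ} (h : ∀ᵐ q ∂sphereMeasure, f q.1 q.2 + lam * invLap f q.1 q.2 = 0) {n : ℕ} {m : ℤ}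
    (hm : |m| ≤ n) : coeff f n m = lam * (coeff f n m / ((n : ℝ) * (n + 1))) := by
  calc coeff f n m = ∫ q, f q.1 q.2 * Ynm n m q.1 q.2 ∂sphereMeasure :=
        coeff_eq_integral_sphereMeasure hf n m
    _ = ∫ q, -lam * (invLap f q.1 q.2 * Ynm n m q.1 q.2) ∂sphereMeasure := by
        refine integral_congr_ae (h.mono fun q hq => ?_)
        linear_combination Ynm n m q.1 q.2 * hq
    _ = lam * (coeff f n m / ((n : ℝ) * (n + 1))) := by
        rw [integral_const_mul, integral_invLap_mul_Ynm hf hm, neg_mul_neg]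

variable {N : ℕ}

lemma coeff_eq_zero_of_ae_add_invLap_eq_zero {f : SphereFun} (hf : Continuous (uncurry f))
    (h : ∀ᵐ q ∂sphereMeasure, f q.1 q.2 + N * (N + 1) * invLap f q.1 q.2 = 0) {n : ℕ}
    (hn : n ≠ N) (m : ℤ) : coeff f n m = 0 := by
  rcases lt_or_ge (n : ℤ) |m| with hm | hm
  · exact coeff_eq_zero hm f
  have coeff_eq := coeff_eq_mul_div_of_ae_add_invLap_eq_zero hf h hm
  rcases Nat.eq_zero_or_pos n with rfl | n_pos
  · simpa using coeff_eq
  · field_simp at coeff_eq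
    have eigenvalue_gap_mul : ((n : ℝ) - N) * (n + N + 1) * coeff f n m = 0 := by
      linear_combination coeff_eq
    have degree_gap_ne : (n : ℝ) - N ≠ 0 := sub_ne_zero.mpr (Nat.cast_injective.ne hn)
    exact (mul_eq_zero.mp eigenvalue_gap_mul).resolve_left
      (mul_ne_zero degree_gap_ne (by positivity))

lemma eqOn_harmonicSum_of_ae_add_invLap_eq_zero {f : SphereFun} (hf : Continuous (uncurry f))
    (hper : PeriodicPhi f)
    (h : ∀ᵐ q ∂sphereMeasure, f q.1 q.2 + N * (N + 1) * invLap f q.1 q.2 = 0) :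
    EqOn f (harmonicSum N (coeff f N)) (Icc 0 π) := by
  let difference : SphereFun := fun θ φ => f θ φ - harmonicSum N (coeff f N) θ φ
  have continuous_difference : Continuous (uncurry difference) :=
    hf.sub (continuous_uncurry_harmonicSum N _)
  have periodic_difference : PeriodicPhi difference := fun θ φ => by
    simp only [difference, hper θ φ, periodicPhi_harmonicSum N _ θ φ]
  have coeff_difference (n : ℕ) (m : ℤ) : coeff difference n m = 0 := by
    rw [coeff_sub hf (continuous_uncurry_harmonicSum N _), coeff_harmonicSum]
    rcases eq_or_ne n N with rfl | hn
    · split_ifs with hm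
      · exact sub_self _
      · rw [coeff_eq_zero (by simpa using hm), sub_zero]
    · rw [coeff_eq_zero_of_ae_add_invLap_eq_zero hf h hn, if_neg (hn ·.1), sub_zero]
  intro θ hθ
  exact sub_eq_zero.mp
    (eq_zero_of_forall_coeff_eq_zero continuous_difference periodic_difference coeff_difference hθ)

lemma exists_zonal_add_harmonicSum_of_ae {ω : SphereFun} (hω : ContDiff ℝ 1 (uncurry ω))
    (hper : PeriodicPhi ω)
    (h : ∀ᵐ q ∂sphereMeasure, dPhi ω q.1 q.2 + N * (N + 1) * invLap (dPhi ω) q.1 q.2 = 0) :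
    ∃ (z : SphereFun) (c : ℤ → ℝ), Zonal z ∧
      ∀ θ ∈ Icc 0 π, ∀ φ, ω θ φ = z θ φ + harmonicSum N c θ φ := by
  have dPhi_eq := eqOn_harmonicSum_of_ae_add_invLap_eq_zero (continuous_uncurry_dPhi hω)
    (periodicPhi_dPhi hper) h
  simp only [funext (coeff_dPhi hω hper N)] at dPhi_eq
  refine ⟨fun θ _ => ω θ 0 - harmonicSum N (coeff ω N) θ 0, coeff ω N, fun _ _ _ => rfl,
    fun θ hθ φ => ?_⟩
  have hasDerivAt_difference (φ : ℝ) :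
      HasDerivAt (ω θ - harmonicSum N (coeff ω N) θ) 0 φ := by
    have := (hasDerivAt_dPhi hω θ φ).sub (hasDerivAt_harmonicSum N (coeff ω N) θ φ)
    rwa [dPhi_eq hθ, sub_self] at this
  have difference_eq := is_const_of_deriv_eq_zero
    (fun φ => (hasDerivAt_difference φ).differentiableAt)
    (fun φ => (hasDerivAt_difference φ).deriv) φ 0
  simp only [Pi.sub_apply] at difference_eq
  linarith

lemma dPhi_add_invLap_dPhi_eq_zero (hN : N ≠ 0) {ω z : SphereFun} {c : ℤ → ℝ} (hz : Zonal z)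
    (h : ∀ θ ∈ Icc 0 π, ∀ φ, ω θ φ = z θ φ + harmonicSum N c θ φ) {θ : ℝ} (hθ : θ ∈ Icc 0 π)
    (φ : ℝ) : dPhi ω θ φ + N * (N + 1) * invLap (dPhi ω) θ φ = 0 := by
  have dPhi_eq : EqOn (dPhi ω) (harmonicSum N fun m => m * c (-m)) (Icc 0 π) := fun θ hθ => by
    have ω_eq : ω θ = fun φ => z θ 0 + harmonicSum N c θ φ :=
      funext fun φ => by rw [h θ hθ φ, hz θ φ 0]
    funext φ
    rw [dPhi, ω_eq]
    exact ((hasDerivAt_harmonicSum N c θ φ).const_add _).deriv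
  rw [invLap_congr dPhi_eq, invLap_harmonicSum, dPhi_eq hθ]
  field_simp
  ring

lemma ae_mul_cos_add_ne_zero {a b : ℝ} (hab : a ≠ 0 ∨ b ≠ 0) :
    ∀ᵐ q ∂sphereMeasure, a * cos q.1 + b ≠ 0 := by
  have ae_ne_arccos : ∀ᵐ q ∂sphereMeasure, q.1 ≠ arccos (-b / a) :=
    (sphereMeasure_absolutelyContinuous.trans
      Measure.restrict_le_self.absolutelyContinuous).ae_le
      (Measure.quasiMeasurePreserving_fst.ae (Measure.ae_ne volume _))
  filter_upwards [ae_ne_arccos, ae_sphereMeasure_mem] with q hq mem zero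
  rcases eq_or_ne a 0 with rfl | ha
  · exact hab.elim (· rfl) (· (by simpa using zero))
  · have cos_eq : cos q.1 = -b / a := by
      field_simp
      linarith
    exact hq (by rw [← cos_eq, arccos_cos mem.1.1 mem.1.2])

lemma ae_dPhi_add_six_mul_invLap_eq_zero {β γ : ℝ} (hβγ : 0 < β ^ 2 + γ ^ 2) {ω : SphereFun}
    (h : ∀ θ ∈ Icc 0 π, ∀ φ, Lop β γ ω θ φ = 0) :
    ∀ᵐ q ∂sphereMeasure, dPhi ω q.1 q.2 + 6 * invLap (dPhi ω) q.1 q.2 = 0 := by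
  have factor_nontrivial : 3 * β * √(5 / π) ≠ 0 ∨ γ * √(3 / π) ≠ 0 := by
    have parameter_ne_zero : β ≠ 0 ∨ γ ≠ 0 := by
      by_contra! both_zero
      simp [both_zero] at hβγ
    exact parameter_ne_zero.imp (fun hβ => by positivity) (fun hγ => by positivity)
  filter_upwards [ae_sphereMeasure_mem, ae_mul_cos_add_ne_zero factor_nontrivial] with q mem hq
  exact (mul_eq_zero.mp (h q.1 mem.1 q.2)).resolve_left (mul_ne_zero one_half_pos.ne' hq)

end Kernel

theorem kernel_of_linearized_operator_general (β γ : ℝ) (hβγ : 0 < β ^ 2 + γ ^ 2)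
    (ω : SphereFun) (hω : ContDiff ℝ 1 (Function.uncurry ω)) (hper : PeriodicPhi ω) :
    (∀ θ ∈ Set.Icc (0 : ℝ) Real.pi, ∀ φ : ℝ, Lop β γ ω θ φ = 0) ↔
    ∃ (z : SphereFun) (c : ℤ → ℝ), Zonal z ∧
      ∀ θ ∈ Set.Icc (0 : ℝ) Real.pi, ∀ φ : ℝ,
        ω θ φ = z θ φ + ∑ m ∈ Finset.Icc (-2 : ℤ) 2, c m * Ynm 2 m θ φ := by
  have eigenvalue_two : ((2 : ℕ) : ℝ) * ((2 : ℕ) + 1) = 6 := by norm_num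
  constructor
  · intro hL
    have kernel_ae := ae_dPhi_add_six_mul_invLap_eq_zero hβγ hL
    rw [← eigenvalue_two] at kernel_ae
    exact exists_zonal_add_harmonicSum_of_ae hω hper kernel_ae
  · rintro ⟨z, c, hz, hω_eq⟩ θ hθ φ
    have kernel_eq := dPhi_add_invLap_dPhi_eq_zero two_ne_zero hz hω_eq hθ φ
    rw [eigenvalue_two] at kernel_eq
    rw [Lop, kernel_eq, mul_zero]

/-- The kernel of the linearized operator `L` consists
exactly of the sums of a zonal function and an element of
`span{Y₂^m : |m| ≤ 2}`. -/
theorem kernel_of_linearized_operator (β γ : ℝ) (hβγ : 0 < β^2 + γ^2)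
    (ω : SphereFun) (hsm : SphSmooth ω) (hper : PeriodicPhi ω)
    (hH2 : sobNormSq 2 ω < ⊤) (hmean : coeff ω 0 0 = 0) :
    (∀ θ ∈ Set.Icc (0:ℝ) Real.pi, ∀ φ : ℝ, Lop β γ ω θ φ = 0) ↔
    ∃ (z : SphereFun) (c : ℤ → ℝ), Zonal z ∧
      ∀ θ ∈ Set.Icc (0:ℝ) Real.pi, ∀ φ : ℝ,
        ω θ φ = z θ φ + ∑ m ∈ Finset.Icc (-2 : ℤ) 2, c m * Ynm 2 m θ φ := by
  exact kernel_of_linearized_operator_general β γ hβγ ω (hsm.of_le (mod_cast le_top)) hper
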